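/- Let x be a fractional Brownian motion with Hurst parameter ν ∈ (0,1/2] and let ℓ be the integer determined by ℓ−1 ≤ 1/(2ν) < ℓ. Fix i ∈ {1,…,ℓ−1} and integers q,q′ ≥ ℓ. Then: (i) if |q−q′| ≤ 2i, there is a constant K depending only on ν and ℓ such that for all n ≥ 1 and all 0 ≤ s ≤ t ≤ 1, E[J_s^t(x^i;h^{n,q}) · J_s^t(x^i;h^{n,q′})] ≤ K·n·(t−s)^{2iν+1} · Σ_r r!·C(q,r)·C(q′,r), the sum ranging over integers r with (q+q′)/2 − i ≤ r ≤ min(q,q′) and C(q,r) denoting the binomial coefficient; (ii) if |q−q′| > 2i, then E[J_s^t(x^i;h^{n,q}) · J_s^t(x^i;h^{n,q′})] = 0 for all n and all 0 ≤ s ≤ t ≤ 1. -/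

import Mathlib

/-!
The product of the two discrete integrals is a double sum over grid points `j`, `k` of moments
`E[X ^ i * Y ^ i * H_q(ξ) * H_p(η)]`, where `X`, `Y` are the increments of the rescaled process
`n ^ ν * x` from the starting grid point `m = ⌈n s⌉` to `j` and `k`, and `ξ`, `η` are its unit
increments after `j` and `k`. The vector `(X, Y, ξ, η)` is centered Gaussian, and by
self-similarity its covariances are those of fBm on the integers.

Such moments are computed by Gaussian integration by parts (`gauss_stein`), which holds for
polynomials of a possibly degenerate Gaussian vector: split off the component `Z i`, the residuals
being independent of it, and integrate by parts in one dimension. Together with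
`H_{q+1}(t) = t H_q(t) - q H_{q-1}(t)` this gives a recursion (`wick_rec`) in which a Hermite factor
is only ever contracted with `X`, `Y` or the other Hermite factor. Covariances between `ξ`, `η` and
`X`, `Y` are at most `1` because `2 ν ≤ 1`, so, contracting `r` times between the two Hermite
factors, the moment is at most
`∑ r, r! C(q,r) C(p,r) |E[ξ η]| ^ r * (2i)(2i-1)⋯(2i-(q+p-2r)+1)`, times a bound for the remaining
moments of `X`, `Y` (`wickM_quad_le`). The falling factorial vanishes when `q + p - 2 r > 2 i`: this
restricts the range of `r`, and leaves nothing if `|q - p| > 2 i`, which is the orthogonality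
statement. If `q, p > i`, then only `r ≥ 1` survive, so a factor `|E[ξ η]|` can be extracted; by
concavity of `t ↦ t ^ (2ν)` its sum over `k` telescopes and is at most `2` (`sum_incCov_le`). With at
most `n (t - s)` indices `j`, and moments of order at most `2 i` of `X`, `Y` bounded by
`(2i)! (n (t - s)) ^ (2 i ν)`, this is the claimed estimate.
-/


open MeasureTheory ProbabilityTheory Filter
open scoped ENNReal NNReal

noncomputable section

variable {Ω : Type*} [MeasurableSpace Ω]

/-- The smallest point `⌈n s⌉ / n` of the uniform `n`-partition that is `≥ s`. -/
def eps (n : ℕ) (s : ℝ) : ℝ := (⌈(n : ℝ) * s⌉ : ℝ) / n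

/-- Discrete integral `J_s^t(f;h)` of a two-parameter process `f` against the
increments `h k = h_{t_k t_{k+1}}` along the uniform `n`-partition. -/
def Jtwo (n : ℕ) (f : ℝ → ℝ → Ω → ℝ) (h : ℕ → Ω → ℝ) (s t : ℝ) (ω : Ω) : ℝ :=
  ∑ k ∈ Finset.range n,
    if s ≤ (k : ℝ) / n ∧ (k : ℝ) / n < t then f (eps n s) ((k : ℝ) / n) ω * h k ω else 0

/-- Discrete integral `J_s^t(y;h)` of a one-parameter path `y`. -/
def Jone (n : ℕ) (y : ℝ → Ω → ℝ) (h : ℕ → Ω → ℝ) (s t : ℝ) (ω : Ω) : ℝ :=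
  ∑ k ∈ Finset.range n,
    if s ≤ (k : ℝ) / n ∧ (k : ℝ) / n < t then (y ((k : ℝ) / n) ω - y (eps n s) ω) * h k ω else 0

/-- A scalar `(L_p, ν, ℓ)`-rough path over the continuous process `X`. -/
def IsRoughPath (P : Measure Ω) (p : ℝ≥0∞) (ν : ℝ) (ℓ : ℕ) (C : ℝ)
    (X : ℝ → Ω → ℝ) (x : ℕ → ℝ → ℝ → Ω → ℝ) : Prop :=
  (∀ i s t, Measurable (x i s t)) ∧
  (∀ ω, ContinuousOn (fun t => X t ω) (Set.Icc 0 1)) ∧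
  (∀ s t ω, x 0 s t ω = 1) ∧
  (∀ s t ω, x 1 s t ω = X t ω - X s ω) ∧
  (∀ k, 1 ≤ k → k ≤ ℓ - 1 → ∀ s u t : ℝ, 0 ≤ s → s ≤ u → u ≤ t → t ≤ 1 → ∀ ω,
    x k s t ω = ∑ j ∈ Finset.range (k + 1), x (k - j) s u ω * x j u t ω) ∧
  (∀ k, k ≤ ℓ - 1 → ∀ s t : ℝ, 0 ≤ s → s ≤ t → t ≤ 1 →
    eLpNorm (x k s t) p P ≤ ENNReal.ofReal ((C * (t - s) ^ ν) ^ k))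

/-- `(y^{(0)},…,y^{(ℓ-1)})` is controlled by the rough path `x` in `L₂`,
with remainder constant `K₀`. -/
def Controlled (P : Measure Ω) (ν : ℝ) (ℓ : ℕ) (K₀ : ℝ)
    (x : ℕ → ℝ → ℝ → Ω → ℝ) (y : ℕ → ℝ → Ω → ℝ) : Prop :=
  (∀ k, k ≤ ℓ - 1 → ∀ t, Measurable (y k t)) ∧
  (∀ k, k ≤ ℓ - 1 → ∀ ω, ContinuousOn (fun t => y k t ω) (Set.Icc 0 1)) ∧
  (∀ ω, y 0 0 ω = 0) ∧
  (∀ k, k ≤ ℓ - 1 → ∀ s t : ℝ, 0 ≤ s → s ≤ t → t ≤ 1 →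
    eLpNorm (fun ω => y k t ω - y k s ω -
        ∑ j ∈ Finset.Icc 1 (ℓ - 1 - k), y (k + j) s ω * x j s t ω) 2 P
      ≤ ENNReal.ofReal (K₀ * (t - s) ^ (((ℓ - k : ℕ) : ℝ) * ν)))

/-- Covariance of one-dimensional fractional Brownian motion. -/
def fbmCov (ν s t : ℝ) : ℝ := (s ^ (2 * ν) + t ^ (2 * ν) - |t - s| ^ (2 * ν)) / 2

/-- `x` is a fractional Brownian motion with Hurst parameter `ν` on `[0,1]`:
a measurable process with (a.s.) continuous sample paths all of whose finite
linear combinations are centered Gaussian with the fBm covariance. -/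
def IsFBM (P : Measure Ω) (ν : ℝ) (x : ℝ → Ω → ℝ) : Prop :=
  (∀ t, Measurable (x t)) ∧
  (∀ᵐ ω ∂P, ContinuousOn (fun t => x t ω) (Set.Icc 0 1)) ∧
  ∀ (m : ℕ) (t : Fin m → ℝ), (∀ j, t j ∈ Set.Icc (0 : ℝ) 1) →
    ∀ a : Fin m → ℝ,
      P.map (fun ω => ∑ j, a j * x (t j) ω) =
        gaussianReal 0 (∑ j, ∑ k, a j * a k * fbmCov ν (t j) (t k)).toNNReal

/-- Correlation function of the increments of fBm. -/
def rho (ν : ℝ) (k : ℤ) : ℝ :=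
  (|(k : ℝ) + 1| ^ (2 * ν) + |(k : ℝ) - 1| ^ (2 * ν) - 2 * |(k : ℝ)| ^ (2 * ν)) / 2

/-- Hermite polynomial `H_q` (probabilists' normalization). -/
def Hq (q : ℕ) (t : ℝ) : ℝ := Polynomial.aeval t (Polynomial.hermite q)

/-- The increments `h^{n,q}_{t_k t_{k+1}} = H_q(n^ν δx_{t_k t_{k+1}})`. -/
def hermIncr (x : ℝ → Ω → ℝ) (ν : ℝ) (n q : ℕ) (k : ℕ) (ω : Ω) : ℝ :=
  Hq q ((n : ℝ) ^ ν * (x (((k : ℝ) + 1) / n) ω - x ((k : ℝ) / n) ω))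

/-- Canonical rough-path lift of a one-dimensional process: `x^i_{st} = (δx_{st})^i / i!`. -/
def xlift (x : ℝ → Ω → ℝ) (i : ℕ) (s t : ℝ) (ω : Ω) : ℝ :=
  (x t ω - x s ω) ^ i / (Nat.factorial i : ℝ)

/-- Hermite coefficient `a_q = (1/q!) ∫ f H_q dγ` of `f` in `L²(γ)`. -/
def hermCoeff (f : ℝ → ℝ) (q : ℕ) : ℝ :=
  (Nat.factorial q : ℝ)⁻¹ * ∫ t, f t * Hq q t ∂(gaussianReal 0 1)

/-- `c_p = E|N|^p = 2^{p/2} Γ((p+1)/2)/√π`. -/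
def cconst (r : ℝ) : ℝ := (2 : ℝ) ^ (r / 2) * Real.Gamma ((r + 1) / 2) / Real.sqrt Real.pi

/-! ### Gaussian integration by parts for polynomials -/

lemma gauss_pdf_hasDerivAt (v : ℝ≥0) (t : ℝ) :
    HasDerivAt (gaussianPDFReal 0 v) (-(t / v) * gaussianPDFReal 0 v t) t := by
  have h1 : HasDerivAt (fun x : ℝ => -(x - 0) ^ 2 / (2 * (v : ℝ))) (-(t / v)) t := by
    have := (((hasDerivAt_id' t).sub_const 0).fun_pow 2).fun_neg.div_const (2 * (v : ℝ))
    refine this.congr_deriv ?_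
    simp only [sub_zero, Nat.cast_ofNat, Nat.add_one_sub_one, pow_one, mul_one]
    rw [← neg_div, neg_mul_eq_mul_neg, mul_div_mul_left _ _ two_ne_zero]
  have h2 := (h1.exp).const_mul ((√(2 * Real.pi * v))⁻¹)
  rw [gaussianPDFReal_def]
  refine h2.congr_deriv ?_
  ring

lemma poly_integrable_gauss (v : ℝ≥0) (p : Polynomial ℝ) :
    Integrable (fun t => p.eval t) (gaussianReal 0 v) := by
  have hk : ∀ k : ℕ, Integrable (fun t : ℝ => t ^ k) (gaussianReal 0 v) := by
    intro k
    have := (memLp_id_gaussianReal (μ := 0) (v := v) (k : ℝ≥0))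
    by_cases h0 : k = 0
    · subst h0; simp
    have h := this.integrable_norm_pow (p := k) (by simpa using h0)
    refine h.mono' (by fun_prop) (ae_of_all _ fun t => ?_)
    simp
  simp only [Polynomial.eval_eq_sum_range]
  exact integrable_finsetSum _ fun k _ => (hk k).const_mul _

/-- One-dimensional integration by parts, including the degenerate law `v = 0`. -/
lemma poly_stein_gauss (v : ℝ≥0) (p : Polynomial ℝ) :
    ∫ t, t * p.eval t ∂(gaussianReal 0 v) = v * ∫ t, p.derivative.eval t ∂(gaussianReal 0 v) := by
  by_cases hv : v = 0
  · subst hv; simp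
  have hv' : (v : ℝ) ≠ 0 := by exact_mod_cast hv
  have hint : ∀ p : Polynomial ℝ, Integrable (fun t => gaussianPDFReal 0 v t * p.eval t) := by
    intro p
    have := poly_integrable_gauss v p
    rw [gaussianReal_of_var_ne_zero _ hv, gaussianPDF_def,
      integrable_withDensity_iff_integrable_smul' (by fun_prop) (by simp)] at this
    simpa [ENNReal.toReal_ofReal, gaussianPDFReal_nonneg] using this
  have h := integral_eq_zero_of_hasDerivAt_of_integrable
    (f := fun t => gaussianPDFReal 0 v t * p.eval t)
    (f' := fun t => -(1 / v : ℝ) * (gaussianPDFReal 0 v t * (Polynomial.X * p).eval t)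
      + gaussianPDFReal 0 v t * p.derivative.eval t)
    (fun t => by
      refine ((gauss_pdf_hasDerivAt v t).fun_mul (p.hasDerivAt t)).congr_deriv ?_
      simp only [Polynomial.eval_mul, Polynomial.eval_X]
      ring)
    (((hint _).const_mul _).add (hint _)) (hint p)
  rw [integral_add ((hint _).const_mul _) (hint _), integral_const_mul] at h
  rw [integral_gaussianReal_eq_integral_smul hv, integral_gaussianReal_eq_integral_smul hv]
  simp only [smul_eq_mul]
  simp only [Polynomial.eval_mul, Polynomial.eval_X] at h
  have h3 := congrArg (fun z => (v : ℝ) * z) h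
  simp only [mul_zero, mul_add, ← mul_assoc, mul_neg, mul_one_div_cancel hv', neg_mul, one_mul]
    at h3
  simp only [← mul_assoc]
  linarith

/-- Chain rule for a multivariate polynomial along the line `t ↦ w + t c`. -/
lemma derivative_line {ι : Type*} [Fintype ι] (w c : ι → ℝ) (F : MvPolynomial ι ℝ) :
    (MvPolynomial.aeval (fun j => Polynomial.C (w j) + Polynomial.C (c j) * Polynomial.X) F).derivative
      = ∑ j, Polynomial.C (c j) * MvPolynomial.aeval
        (fun j => Polynomial.C (w j) + Polynomial.C (c j) * Polynomial.X) (MvPolynomial.pderiv j F) := by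
  classical
  induction F using MvPolynomial.induction_on with
  | C a => simp
  | add p q hp hq => simp [hp, hq, mul_add, Finset.sum_add_distrib]
  | mul_X p i hp =>
    have hd : (Polynomial.C (w i) + Polynomial.C (c i) * Polynomial.X).derivative
        = Polynomial.C (c i) := by simp
    have hX : ∀ j, Polynomial.C (c j) * MvPolynomial.aeval
          (fun j => Polynomial.C (w j) + Polynomial.C (c j) * Polynomial.X)
            (MvPolynomial.pderiv j (p * MvPolynomial.X i))
        = Polynomial.C (c j) * MvPolynomial.aeval
            (fun j => Polynomial.C (w j) + Polynomial.C (c j) * Polynomial.X)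
              (MvPolynomial.pderiv j p)
            * (Polynomial.C (w i) + Polynomial.C (c i) * Polynomial.X)
          + if i = j then MvPolynomial.aeval
            (fun j => Polynomial.C (w j) + Polynomial.C (c j) * Polynomial.X) p
              * Polynomial.C (c j) else 0 := by
      intro j
      rw [MvPolynomial.pderiv_mul, MvPolynomial.pderiv_X, Pi.single_apply, map_add, map_mul,
        map_mul, MvPolynomial.aeval_X]
      by_cases h : i = j
      · subst h
        simp only [if_true, map_one, mul_one]
        ring
      · simp only [if_neg h, map_zero, mul_zero, add_zero]
        ring
    rw [Finset.sum_congr rfl fun j _ => hX j, Finset.sum_add_distrib, Finset.sum_ite_eq,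
      if_pos (Finset.mem_univ i), ← Finset.sum_mul, ← hp, map_mul, MvPolynomial.aeval_X,
      Polynomial.derivative_mul, hd]

lemma eval_line {ι : Type*} (w c : ι → ℝ) (F : MvPolynomial ι ℝ) (t : ℝ) :
    (MvPolynomial.aeval (fun j => Polynomial.C (w j) + Polynomial.C (c j) * Polynomial.X) F).eval t
      = MvPolynomial.eval (fun j => w j + c j * t) F := by
  induction F using MvPolynomial.induction_on with
  | C a => simp
  | add p q hp hq => simp [hp, hq]
  | mul_X p i hp => simp [hp]

lemma eval_aeval_X {ι : Type*} (z : ι → ℝ) (i : ι) (H : Polynomial ℝ) :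
    MvPolynomial.eval z (Polynomial.aeval (MvPolynomial.X i) H) = H.eval (z i) := by
  induction H using Polynomial.induction_on' with
  | add p q hp hq => simp [hp, hq]
  | monomial n a => simp [Polynomial.aeval_monomial]

/-- Hölder's inequality: a polynomial in variables with all moments has all moments. -/
lemma eval_memLp {Ω : Type*} [MeasurableSpace Ω] {P : Measure Ω} [IsProbabilityMeasure P]
    {ι : Type*} {Z : ι → Ω → ℝ}
    (hZ : ∀ i, ∀ p : ℕ, MemLp (Z i) p P) (F : MvPolynomial ι ℝ) (p : ℕ) :
    MemLp (fun ω => MvPolynomial.eval (fun i => Z i ω) F) p P := by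
  induction F using MvPolynomial.induction_on generalizing p with
  | C a => simpa using memLp_const a
  | add f g hf hg => simp only [map_add]; exact (hf p).add (hg p)
  | mul_X f i hf =>
    have h1 := hf (2 * p)
    have h2 := hZ i (2 * p)
    simp only [map_mul, MvPolynomial.eval_X]
    have : ENNReal.HolderTriple ((2 * p : ℕ) : ℝ≥0∞) ((2 * p : ℕ) : ℝ≥0∞) (p : ℝ≥0∞) := by
      constructor
      push_cast
      rw [ENNReal.mul_inv (by simp) (by simp), ← add_mul, ENNReal.inv_two_add_inv_two, one_mul]
    exact MemLp.mul' h2 h1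

lemma gauss_memLp {Ω : Type*} [MeasurableSpace Ω] {P : Measure Ω} [IsProbabilityMeasure P]
    {ι : Type*} [Fintype ι] {Z : ι → Ω → ℝ} (hG : HasGaussianLaw (fun ω i => Z i ω) P) (i : ι)
    (p : ℕ) : MemLp (Z i) p P :=
  (hG.eval i).memLp (by simp)

lemma gauss_integrable {Ω : Type*} [MeasurableSpace Ω] {P : Measure Ω} [IsProbabilityMeasure P]
    {ι : Type*} [Fintype ι] {Z : ι → Ω → ℝ} (hG : HasGaussianLaw (fun ω i => Z i ω) P)
    (F : MvPolynomial ι ℝ) : Integrable (fun ω => MvPolynomial.eval (fun i => Z i ω) F) P := by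
  have := eval_memLp (gauss_memLp hG) F 1
  exact memLp_one_iff_integrable.1 (by simpa using this)

/-- Gaussian integration by parts (Stein, Isserlis) for polynomials. No nondegeneracy is assumed:
`Z` is decomposed as `W + c Z i` with `W` independent of `Z i`, and the one-dimensional identity is
applied on each line in direction `c`. -/
lemma gauss_stein {Ω : Type*} [MeasurableSpace Ω] {P : Measure Ω} [IsProbabilityMeasure P]
    {ι : Type*} [Fintype ι] {Z : ι → Ω → ℝ} (hG : HasGaussianLaw (fun ω i => Z i ω) P)
    (h0 : ∀ i, ∫ ω, Z i ω ∂P = 0) (i : ι) (F : MvPolynomial ι ℝ) :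
    ∫ ω, Z i ω * MvPolynomial.eval (fun i => Z i ω) F ∂P
      = ∑ j, (∫ ω, Z i ω * Z j ω ∂P) *
          ∫ ω, MvPolynomial.eval (fun i => Z i ω) (MvPolynomial.pderiv j F) ∂P := by
  have hm2 : ∀ j, MemLp (Z j) 2 P := fun j => by simpa using gauss_memLp hG j 2
  have hcov : ∀ j k, cov[Z j, Z k; P] = ∫ ω, Z j ω * Z k ω ∂P := by
    intro j k
    rw [covariance_eq_sub (hm2 j) (hm2 k), h0 j, zero_mul, sub_zero]
    rfl
  have hvar : Var[Z i; P] = ∫ ω, Z i ω * Z i ω ∂P := by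
    rw [← covariance_self (hm2 i).aemeasurable, hcov]
  set v : ℝ := ∫ ω, Z i ω * Z i ω ∂P with hv
  by_cases hv0 : v = 0
  · have hz : Z i =ᵐ[P] 0 := by
      have h1 : 0 ≤ fun ω => Z i ω * Z i ω := fun ω => mul_self_nonneg _
      have := (integral_eq_zero_iff_of_nonneg h1 ((hm2 i).integrable_mul (hm2 i))).1 (hv ▸ hv0)
      filter_upwards [this] with ω hω
      simpa using hω
    rw [integral_eq_zero_of_ae (by filter_upwards [hz] with ω hω; simp [hω])]
    symm
    refine Finset.sum_eq_zero fun j _ => ?_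
    rw [integral_eq_zero_of_ae (by filter_upwards [hz] with ω hω; simp [hω]), zero_mul]
  -- the regression coefficients on `Z i`
  set c : ι → ℝ := fun j => (∫ ω, Z i ω * Z j ω ∂P) / v with hc
  set W : ι → Ω → ℝ := fun j ω => Z j ω - c j * Z i ω with hW
  have hlaw : P.map (Z i) = gaussianReal 0 v.toNNReal := by
    rw [(hG.eval i).map_eq_gaussianReal, h0, hvar]
  have hpair : HasGaussianLaw (fun ω => (fun j => W j ω, fun _ : Unit => Z i ω)) P := by
    let L : (ι → ℝ) →L[ℝ] (ι → ℝ) × (Unit → ℝ) :=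
      (ContinuousLinearMap.pi fun j => ContinuousLinearMap.proj (R := ℝ) (φ := fun _ => ℝ) j
        - c j • ContinuousLinearMap.proj (R := ℝ) (φ := fun _ => ℝ) i).prod
        (ContinuousLinearMap.pi fun _ => ContinuousLinearMap.proj (R := ℝ) (φ := fun _ => ℝ) i)
    have := hG.map_fun L
    simpa [L] using this
  have hind0 : IndepFun (fun ω j => W j ω) (fun ω (_ : Unit) => Z i ω) P := by
    refine HasGaussianLaw.indepFun_of_covariance_eval (Y := fun _ => Z i) hpair fun j _ => ?_
    have : W j = Z j - (c j • Z i) := rfl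
    rw [this, covariance_sub_left (hm2 j) ((hm2 i).const_smul _) (hm2 i), covariance_smul_left,
      hcov, hcov, ← hv]
    simp only [hc]
    rw [div_mul_cancel₀ _ hv0, sub_eq_zero]
    exact integral_congr_ae (ae_of_all _ fun ω => mul_comm _ _)
  have hind : IndepFun (fun ω j => W j ω) (Z i) P :=
    hind0.comp (φ := id) (ψ := fun u : Unit → ℝ => u ()) measurable_id (measurable_pi_apply _)
  have hWm : AEMeasurable (fun ω j => W j ω) P := hpair.fst.aemeasurable
  have hZm : AEMeasurable (Z i) P := (hG.eval i).aemeasurable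
  have hprod := (indepFun_iff_map_prod_eq_prod_map_map hWm hZm).1 hind
  have hprob1 : IsProbabilityMeasure (P.map (fun ω j => W j ω)) :=
    Measure.isProbabilityMeasure_map hWm
  -- disintegration along the independent residual
  have key : ∀ G : MvPolynomial ι ℝ, ∀ H : Polynomial ℝ,
      ∫ ω, H.eval (Z i ω) * MvPolynomial.eval (fun i => Z i ω) G ∂P
      = ∫ w, ∫ t, H.eval t * MvPolynomial.eval (fun j => w j + c j * t) G
          ∂(gaussianReal 0 v.toNNReal) ∂(P.map (fun ω j => W j ω)) := by
    intro G H
    have hmeas : Measurable (fun p : (ι → ℝ) × ℝ =>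
        H.eval p.2 * MvPolynomial.eval (fun j => p.1 j + c j * p.2) G) := by
      have h1 : Continuous (fun p : (ι → ℝ) × ℝ =>
        H.eval p.2 * MvPolynomial.eval (fun j => p.1 j + c j * p.2) G) := by
        refine (H.continuous.comp continuous_snd).mul ?_
        exact (MvPolynomial.continuous_eval G).comp (by fun_prop)
      exact h1.measurable
    have heq : (fun ω => H.eval (Z i ω) * MvPolynomial.eval (fun i => Z i ω) G)
        = fun ω => (fun p : (ι → ℝ) × ℝ =>
        H.eval p.2 * MvPolynomial.eval (fun j => p.1 j + c j * p.2) G)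
          ((fun j => W j ω), Z i ω) := by
      funext ω
      simp [hW]
    have hint : Integrable (fun ω => H.eval (Z i ω) * MvPolynomial.eval (fun i => Z i ω) G) P := by
      have := gauss_integrable hG (Polynomial.aeval (MvPolynomial.X i) H * G)
      refine this.congr (ae_of_all _ fun ω => ?_)
      simp only [map_mul, eval_aeval_X]
    rw [heq] at hint ⊢
    rw [← integral_map (hWm.prodMk hZm) hmeas.aestronglyMeasurable, hprod, hlaw]
    rw [integral_prod]
    rw [← hlaw, ← hprod, integrable_map_measure hmeas.aestronglyMeasurable (hWm.prodMk hZm)]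
    exact hint
  have k1 := key F Polynomial.X
  simp only [Polynomial.eval_X] at k1
  have k2 := key (∑ j, MvPolynomial.C (c j) * MvPolynomial.pderiv j F) 1
  simp only [Polynomial.eval_one, one_mul] at k2
  have k3 : ∀ w : ι → ℝ, ∫ t, t * MvPolynomial.eval (fun j => w j + c j * t) F
        ∂(gaussianReal 0 v.toNNReal)
      = v * ∫ t, MvPolynomial.eval (fun j => w j + c j * t)
          (∑ j, MvPolynomial.C (c j) * MvPolynomial.pderiv j F) ∂(gaussianReal 0 v.toNNReal) := by
    intro w
    have := poly_stein_gauss v.toNNReal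
      (MvPolynomial.aeval (fun j => Polynomial.C (w j) + Polynomial.C (c j) * Polynomial.X) F)
    have hv1 : 0 ≤ v := integral_nonneg fun ω => mul_self_nonneg _
    rw [derivative_line, Real.coe_toNNReal _ hv1] at this
    simpa [eval_line, Polynomial.eval_finsetSum] using this
  rw [k1, integral_congr_ae (ae_of_all _ k3), integral_const_mul, ← k2]
  simp only [map_sum, map_mul, MvPolynomial.eval_C]
  rw [integral_finsetSum _ fun j _ => (gauss_integrable hG _).const_mul _, Finset.mul_sum]
  refine Finset.sum_congr rfl fun j _ => ?_
  rw [integral_const_mul, ← mul_assoc]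
  simp only [hc]
  rw [mul_div_cancel₀ _ hv0]

/-! ### Mixed moments of monomials and Hermite polynomials -/

/-- The probabilists' Hermite polynomial with real coefficients. -/
def hermR (q : ℕ) : Polynomial ℝ := (Polynomial.hermite q).map (Int.castRingHom ℝ)

lemma hermite_deriv (q : ℕ) : (Polynomial.hermite q).derivative
    = (q : Polynomial ℤ) * Polynomial.hermite (q - 1) := by
  induction q with
  | zero => simp
  | succ q ih =>
    rw [Polynomial.hermite_succ, Polynomial.derivative_sub, Polynomial.derivative_mul, ih]
    cases q with
    | zero => simp
    | succ q =>
      simp only [Nat.add_sub_cancel]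
      rw [Polynomial.derivative_mul, Polynomial.hermite_succ q]
      simp
      ring

lemma hermR_deriv (q : ℕ) : (hermR q).derivative = Polynomial.C (q : ℝ) * hermR (q - 1) := by
  unfold hermR
  rw [Polynomial.derivative_map, hermite_deriv]
  simp

lemma hermR_succ (q : ℕ) : hermR (q + 1)
    = Polynomial.X * hermR q - Polynomial.C (q : ℝ) * hermR (q - 1) := by
  rw [← hermR_deriv]
  unfold hermR
  rw [Polynomial.hermite_succ, Polynomial.derivative_map]
  simp

lemma hermR_eval (q : ℕ) (t : ℝ) : (hermR q).eval t = Hq q t := by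
  unfold hermR Hq
  rw [Polynomial.eval_map, Polynomial.aeval_def]
  rfl

/-- The polynomial `X ^ a * Y ^ b * H_q(ξ) * H_p(η)` in the four variables `X, Y, ξ, η`, numbered
`0, 1, 2, 3`. -/
def wickF (a b q p : ℕ) : MvPolynomial (Fin 4) ℝ :=
  MvPolynomial.X 0 ^ a * MvPolynomial.X 1 ^ b *
    (Polynomial.aeval (MvPolynomial.X 2) (hermR q) * Polynomial.aeval (MvPolynomial.X 3) (hermR p))

lemma wickF_pderiv (a b q p : ℕ) :
    MvPolynomial.pderiv 0 (wickF a b q p) = MvPolynomial.C (a : ℝ) * wickF (a - 1) b q p ∧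
    MvPolynomial.pderiv 1 (wickF a b q p) = MvPolynomial.C (b : ℝ) * wickF a (b - 1) q p ∧
    MvPolynomial.pderiv 2 (wickF a b q p) = MvPolynomial.C (q : ℝ) * wickF a b (q - 1) p ∧
    MvPolynomial.pderiv 3 (wickF a b q p) = MvPolynomial.C (p : ℝ) * wickF a b q (p - 1) := by
  unfold wickF
  refine ⟨?_, ?_, ?_, ?_⟩ <;>
  · simp [MvPolynomial.pderiv_X, hermR_deriv]
    try ring

section
variable {Ω : Type*} [MeasurableSpace Ω]

/-- The mixed moment `E[X ^ a * Y ^ b * H_q(ξ) * H_p(η)]` for `Z = (X, Y, ξ, η)`. -/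
def wickM (P : Measure Ω) (Z : Fin 4 → Ω → ℝ) (a b q p : ℕ) : ℝ :=
  ∫ ω, MvPolynomial.eval (fun i => Z i ω) (wickF a b q p) ∂P

lemma wickF_eval (z : Fin 4 → ℝ) (a b q p : ℕ) : MvPolynomial.eval z (wickF a b q p)
    = z 0 ^ a * z 1 ^ b * (Hq q (z 2) * Hq p (z 3)) := by
  simp [wickF, eval_aeval_X, hermR_eval]

variable {P : Measure Ω} [IsProbabilityMeasure P] {Z : Fin 4 → Ω → ℝ}

/-- Integration by parts in `Z i`. When an exponent is `0`, the corresponding term carries the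
factor `0`, so the truncated subtraction is harmless. -/
lemma wick_stein (hG : HasGaussianLaw (fun ω i => Z i ω) P)
    (h0 : ∀ i, ∫ ω, Z i ω ∂P = 0) (i : Fin 4) (a b q p : ℕ) :
    ∫ ω, MvPolynomial.eval (fun i => Z i ω) (MvPolynomial.X i * wickF a b q p) ∂P
      = (∫ ω, Z i ω * Z 0 ω ∂P) * (a * wickM P Z (a - 1) b q p)
      + (∫ ω, Z i ω * Z 1 ω ∂P) * (b * wickM P Z a (b - 1) q p)
      + (∫ ω, Z i ω * Z 2 ω ∂P) * (q * wickM P Z a b (q - 1) p)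
      + (∫ ω, Z i ω * Z 3 ω ∂P) * (p * wickM P Z a b q (p - 1)) := by
  obtain ⟨h1, h2, h3, h4⟩ := wickF_pderiv a b q p
  have := gauss_stein hG h0 i (wickF a b q p)
  simp only [map_mul, MvPolynomial.eval_X]
  rw [this, Fin.sum_univ_four, h1, h2, h3, h4]
  simp only [map_mul, MvPolynomial.eval_C, integral_const_mul, wickM]

/-- Lowering the degree of the first Hermite factor. As `ξ` has unit variance, the term from
differentiating `H_q(ξ)` cancels against the one in the Hermite recursion. -/
lemma wick_rec (hG : HasGaussianLaw (fun ω i => Z i ω) P)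
    (h0 : ∀ i, ∫ ω, Z i ω ∂P = 0) (h2 : ∫ ω, Z 2 ω * Z 2 ω ∂P = 1) (a b q p : ℕ) :
    wickM P Z a b (q + 1) p = (∫ ω, Z 2 ω * Z 0 ω ∂P) * (a * wickM P Z (a - 1) b q p)
      + (∫ ω, Z 2 ω * Z 1 ω ∂P) * (b * wickM P Z a (b - 1) q p)
      + (∫ ω, Z 2 ω * Z 3 ω ∂P) * (p * wickM P Z a b q (p - 1)) := by
  have h := wick_stein hG h0 2 a b q p
  have hF : wickF a b (q + 1) p = MvPolynomial.X 2 * wickF a b q p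
      - MvPolynomial.C (q : ℝ) * wickF a b (q - 1) p := by
    unfold wickF
    rw [hermR_succ]
    simp
    ring
  have hM : wickM P Z a b (q + 1) p
      = ∫ ω, MvPolynomial.eval (fun i => Z i ω) (MvPolynomial.X 2 * wickF a b q p) ∂P
        - q * wickM P Z a b (q - 1) p := by
    unfold wickM
    rw [hF, ← integral_const_mul, ← integral_sub (gauss_integrable hG _)
      ((gauss_integrable hG _).const_mul _)]
    simp
  rw [hM, h, h2]
  ring

/-- Lowering the degree of the second Hermite factor once the first one is trivial. -/
lemma wick_rec' (hG : HasGaussianLaw (fun ω i => Z i ω) P)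
    (h0 : ∀ i, ∫ ω, Z i ω ∂P = 0) (h2 : ∫ ω, Z 3 ω * Z 3 ω ∂P = 1) (a b p : ℕ) :
    wickM P Z a b 0 (p + 1) = (∫ ω, Z 3 ω * Z 0 ω ∂P) * (a * wickM P Z (a - 1) b 0 p)
      + (∫ ω, Z 3 ω * Z 1 ω ∂P) * (b * wickM P Z a (b - 1) 0 p) := by
  have h := wick_stein hG h0 3 a b 0 p
  have hF : wickF a b 0 (p + 1) = MvPolynomial.X 3 * wickF a b 0 p
      - MvPolynomial.C (p : ℝ) * wickF a b 0 (p - 1) := by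
    unfold wickF
    rw [hermR_succ]
    simp
    ring
  have hM : wickM P Z a b 0 (p + 1)
      = ∫ ω, MvPolynomial.eval (fun i => Z i ω) (MvPolynomial.X 3 * wickF a b 0 p) ∂P
        - p * wickM P Z a b 0 (p - 1) := by
    unfold wickM
    rw [hF, ← integral_const_mul, ← integral_sub (gauss_integrable hG _)
      ((gauss_integrable hG _).const_mul _)]
    simp
  rw [hM, h, h2]
  push_cast
  ring

lemma wick_zero : wickM P Z 0 0 0 0 = 1 := by
  simp [wickM, wickF_eval, Hq]

lemma wick_rec0 (hG : HasGaussianLaw (fun ω i => Z i ω) P)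
    (h0 : ∀ i, ∫ ω, Z i ω ∂P = 0) (a b : ℕ) :
    wickM P Z (a + 1) b 0 0 = (∫ ω, Z 0 ω * Z 0 ω ∂P) * (a * wickM P Z (a - 1) b 0 0)
      + (∫ ω, Z 0 ω * Z 1 ω ∂P) * (b * wickM P Z a (b - 1) 0 0) := by
  have h := wick_stein hG h0 0 a b 0 0
  have hF : wickF (a + 1) b 0 0 = MvPolynomial.X 0 * wickF a b 0 0 := by
    unfold wickF
    ring
  have hM : wickM P Z (a + 1) b 0 0
      = ∫ ω, MvPolynomial.eval (fun i => Z i ω) (MvPolynomial.X 0 * wickF a b 0 0) ∂P := by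
    unfold wickM
    rw [hF]
  rw [hM, h]
  push_cast
  ring

lemma wick_rec1 (hG : HasGaussianLaw (fun ω i => Z i ω) P)
    (h0 : ∀ i, ∫ ω, Z i ω ∂P = 0) (b : ℕ) :
    wickM P Z 0 (b + 1) 0 0 = (∫ ω, Z 1 ω * Z 1 ω ∂P) * (b * wickM P Z 0 (b - 1) 0 0) := by
  have h := wick_stein hG h0 1 0 b 0 0
  have hF : wickF 0 (b + 1) 0 0 = MvPolynomial.X 1 * wickF 0 b 0 0 := by
    unfold wickF
    ring
  have hM : wickM P Z 0 (b + 1) 0 0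
      = ∫ ω, MvPolynomial.eval (fun i => Z i ω) (MvPolynomial.X 1 * wickF 0 b 0 0) ∂P := by
    unfold wickM
    rw [hF]
  rw [hM, h]
  push_cast
  ring

end

/-! ### Solving the recursion -/

/-- The bound for a moment of `m` linear factors times `H_q(ξ) H_p(η)`: `r` counts the contractions
between the two Hermite factors, each costing `ρ`; the other `q + p - 2 r` legs are contracted with
distinct linear factors. Where `r > q` the truncated subtraction is irrelevant, as `C(q,r) = 0`. -/
def wickB (ρ : ℝ) (m q p : ℕ) : ℝ :=
  ∑ r ∈ Finset.range (p + 1), (r.factorial : ℝ) * (q.choose r : ℝ) * (p.choose r : ℝ) * ρ ^ r *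
    (m.descFactorial (q + p - 2 * r) : ℝ)

lemma wickB_nonneg {ρ : ℝ} (hρ : 0 ≤ ρ) (m q p : ℕ) : 0 ≤ wickB ρ m q p :=
  Finset.sum_nonneg fun r _ => by positivity

lemma wickB_zero (ρ : ℝ) (m p : ℕ) : wickB ρ m 0 p = m.descFactorial p := by
  unfold wickB
  rw [Finset.sum_eq_single 0]
  · simp
  · intro r _ hr
    rw [Nat.choose_eq_zero_of_lt (Nat.pos_of_ne_zero hr)]
    simp
  · simp

lemma mul_descFactorial_pred (m e : ℕ) :
    (m : ℝ) * ((m - 1).descFactorial e : ℝ) = (m.descFactorial (e + 1) : ℝ) := by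
  cases m with
  | zero => simp
  | succ m => rw [Nat.succ_descFactorial_succ]; push_cast; simp

/-- The recursion satisfied by the bound mirrors `wick_rec`. -/
lemma wickB_succ (ρ : ℝ) (m q p : ℕ) :
    wickB ρ m (q + 1) p = m * wickB ρ (m - 1) q p + ρ * (p * wickB ρ m q (p - 1)) := by
  have h1 : m * wickB ρ (m - 1) q p = ∑ r ∈ Finset.range (p + 1),
      (r.factorial : ℝ) * (q.choose r : ℝ) * (p.choose r : ℝ) * ρ ^ r *
        (m.descFactorial (q + 1 + p - 2 * r) : ℝ) := by
    unfold wickB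
    rw [Finset.mul_sum]
    refine Finset.sum_congr rfl fun r _ => ?_
    by_cases hr : r ≤ q ∧ r ≤ p
    · have : q + 1 + p - 2 * r = (q + p - 2 * r) + 1 := by omega
      rw [this, ← mul_descFactorial_pred]
      ring
    · have : (q.choose r : ℝ) * (p.choose r : ℝ) = 0 := by
        by_cases h : r ≤ q
        · rw [Nat.choose_eq_zero_of_lt (n := p) (by omega)]; simp
        · rw [Nat.choose_eq_zero_of_lt (n := q) (by omega)]; simp
      rw [mul_assoc (r.factorial : ℝ), this]
      simp
  cases p with
  | zero => rw [h1]; simp [wickB]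
  | succ p =>
    have h2 : ρ * ((p + 1 : ℕ) * wickB ρ m q p) = ∑ r ∈ Finset.range (p + 1),
        ((r + 1).factorial : ℝ) * (q.choose r : ℝ) * ((p + 1).choose (r + 1) : ℝ) * ρ ^ (r + 1) *
          (m.descFactorial (q + 1 + (p + 1) - 2 * (r + 1)) : ℝ) := by
      unfold wickB
      rw [Finset.mul_sum, Finset.mul_sum]
      refine Finset.sum_congr rfl fun r _ => ?_
      have h3 : q + 1 + (p + 1) - 2 * (r + 1) = q + p - 2 * r := by omega
      have h4 : ((p + 1 : ℕ) : ℝ) * (p.choose r : ℝ) = ((p + 1).choose (r + 1) : ℝ) * (r + 1 : ℕ) := by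
        exact_mod_cast Nat.add_one_mul_choose_eq p r
      rw [h3, Nat.factorial_succ, pow_succ]
      push_cast at h4 ⊢
      linear_combination (ρ * ((r.factorial : ℝ) * (q.choose r : ℝ) * ρ ^ r *
        (m.descFactorial (q + p - 2 * r) : ℝ))) * h4
    rw [h1, Nat.add_sub_cancel, h2]
    unfold wickB
    rw [Finset.sum_range_succ', Finset.sum_range_succ' _ (p + 1)]
    conv_rhs => rw [add_right_comm, ← Finset.sum_add_distrib]
    congr 1
    · refine Finset.sum_congr rfl fun r _ => ?_
      rw [Nat.choose_succ_succ]
      push_cast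
      ring
    · simp

/-- Any array satisfying the recursions of the mixed moments is dominated by `wickB`. -/
lemma wick_bound_abs (M : ℕ → ℕ → ℕ → ℕ → ℝ) (I : ℕ) (A ρ c20 c21 c23 c30 c31 : ℝ)
    (h20 : |c20| ≤ 1) (h21 : |c21| ≤ 1) (h30 : |c30| ≤ 1) (h31 : |c31| ≤ 1) (h23 : |c23| ≤ ρ)
    (hq : ∀ a b q p, M a b (q + 1) p = c20 * (a * M (a - 1) b q p)
      + c21 * (b * M a (b - 1) q p) + c23 * (p * M a b q (p - 1)))
    (hp : ∀ a b p, M a b 0 (p + 1) = c30 * (a * M (a - 1) b 0 p)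
      + c31 * (b * M a (b - 1) 0 p))
    (h0 : ∀ a b, a + b ≤ I → |M a b 0 0| ≤ A) (a b q p : ℕ) (hab : a + b ≤ I) :
    |M a b q p| ≤ A * wickB ρ (a + b) q p := by
  have hρ : 0 ≤ ρ := (abs_nonneg _).trans h23
  -- contraction with one of the two linear factors
  have step : ∀ (c : ℝ) (k : ℕ) (x y : ℝ), |c| ≤ 1 → (k ≠ 0 → |x| ≤ y) →
      |c * (k * x)| ≤ k * y := by
    intro c k x y hc h
    rcases Nat.eq_zero_or_pos k with rfl | hk
    · simp
    rw [abs_mul, abs_mul, Nat.abs_cast]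
    calc |c| * (k * |x|) ≤ 1 * (k * y) := by
          have := h hk.ne'
          gcongr
      _ = k * y := one_mul _
  induction q generalizing a b p with
  | zero =>
    rw [wickB_zero]
    induction p generalizing a b with
    | zero => simpa using h0 a b hab
    | succ p ih =>
      rw [hp, ← mul_descFactorial_pred]
      have e1 := step c30 a _ (A * ((a + b - 1).descFactorial p)) h30 fun h => by
        have := ih (a - 1) b (by omega)
        rwa [show a - 1 + b = a + b - 1 by omega] at this
      have e2 := step c31 b _ (A * ((a + b - 1).descFactorial p)) h31 fun h => by
        have := ih a (b - 1) (by omega)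
        rwa [show a + (b - 1) = a + b - 1 by omega] at this
      refine (abs_add_le _ _).trans ((add_le_add e1 e2).trans (le_of_eq ?_))
      push_cast
      ring
  | succ q ih =>
    rw [hq, wickB_succ]
    have e1 := step c20 a _ (A * wickB ρ (a + b - 1) q p) h20 fun h => by
      have := ih (a - 1) b p (by omega)
      rwa [show a - 1 + b = a + b - 1 by omega] at this
    have e2 := step c21 b _ (A * wickB ρ (a + b - 1) q p) h21 fun h => by
      have := ih a (b - 1) p (by omega)
      rwa [show a + (b - 1) = a + b - 1 by omega] at this
    have e3 : |c23 * (p * M a b q (p - 1))| ≤ ρ * (p * (A * wickB ρ (a + b) q (p - 1))) := by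
      rw [abs_mul, abs_mul, Nat.abs_cast]
      have := ih a b (p - 1) hab
      gcongr
    refine (abs_add_le _ _).trans ((add_le_add ((abs_add_le _ _).trans (add_le_add e1 e2)) e3).trans
      (le_of_eq ?_))
    push_cast
    ring

/-- Moments of two jointly Gaussian variables with covariances at most `S ^ 2`. The bound is
far from sharp; as `S ≥ 1`, it is increasing in the order and needs no parity distinction. -/
lemma moment_bound_abs (M : ℕ → ℕ → ℝ) (S c00 c01 c11 : ℝ) (hS : 1 ≤ S)
    (h00 : |c00| ≤ S ^ 2) (h01 : |c01| ≤ S ^ 2) (h11 : |c11| ≤ S ^ 2) (hz : M 0 0 = 1)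
    (hr0 : ∀ a b, M (a + 1) b = c00 * (a * M (a - 1) b) + c01 * (b * M a (b - 1)))
    (hr1 : ∀ b, M 0 (b + 1) = c11 * (b * M 0 (b - 1))) (a b : ℕ) :
    |M a b| ≤ (a + b).factorial * S ^ (a + b) := by
  have hS0 : 0 ≤ S := by linarith
  -- one contraction removes a variable and costs at most `S ^ 2`
  have step : ∀ (c : ℝ) (k m : ℕ) (x : ℝ), |c| ≤ S ^ 2 →
      (k ≠ 0 → ∃ m', m = m' + 1 ∧ |x| ≤ m'.factorial * S ^ m') → k ≤ m →
      |c * (k * x)| ≤ k * ((m).factorial * S ^ (m + 1)) := by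
    intro c k m x hc h hkm
    rcases Nat.eq_zero_or_pos k with rfl | hk
    · simp
    obtain ⟨m', rfl, hx⟩ := h hk.ne'
    rw [abs_mul, abs_mul, Nat.abs_cast]
    have h1 : (m'.factorial : ℝ) ≤ ((m' + 1).factorial : ℝ) := by
      exact_mod_cast Nat.factorial_le (Nat.le_succ m')
    calc |c| * (k * |x|) ≤ S ^ 2 * (k * (m'.factorial * S ^ m')) := by gcongr
      _ = k * (m'.factorial * S ^ (m' + 1 + 1)) := by ring
      _ ≤ _ := by gcongr
  suffices H : ∀ N a b, a + b = N → |M a b| ≤ N.factorial * S ^ N from H _ a b rfl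
  intro N
  induction N using Nat.strong_induction_on with
  | _ N ih =>
    intro a b hab
    rcases a with _ | a
    · rcases b with _ | b
      · obtain rfl : N = 0 := by omega
        simp [hz]
      · obtain rfl : N = b + 1 := by omega
        rw [hr1]
        have e := step c11 b b (M 0 (b - 1)) h11
          (fun h => ⟨b - 1, by omega, ih (b - 1) (by omega) 0 (b - 1) (by omega)⟩) le_rfl
        refine e.trans ?_
        rw [← mul_assoc, Nat.factorial_succ]
        push_cast
        gcongr
        linarith
    · obtain rfl : N = a + b + 1 := by omega
      rw [hr0]
      have e1 := step c00 a (a + b) (M (a - 1) b) h00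
        (fun h => ⟨a + b - 1, by omega, ih _ (by omega) _ _ (by omega)⟩) (by omega)
      have e2 := step c01 b (a + b) (M a (b - 1)) h01
        (fun h => ⟨a + b - 1, by omega, ih _ (by omega) _ _ (by omega)⟩) (by omega)
      refine (abs_add_le _ _).trans ((add_le_add e1 e2).trans ?_)
      rw [← add_mul, ← mul_assoc, Nat.factorial_succ]
      push_cast
      exact mul_le_mul_of_nonneg_right (mul_le_mul_of_nonneg_right (by linarith) (by positivity))
        (by positivity)

/-- As `q + p > 2 i`, the term `r = 0` does not contribute, so one factor `ρ` can be kept. -/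
lemma wickB_le {ρ : ℝ} (h0 : 0 ≤ ρ) (h1 : ρ ≤ 1) (i q p : ℕ) (hqp : 2 * i < q + p) :
    wickB ρ (2 * i) q p ≤ ((2 * i).factorial * ρ) * ∑ r ∈ Finset.range (min q p + 1),
      (if ((q : ℝ) + (p : ℝ)) / 2 - (i : ℝ) ≤ (r : ℝ) then
        (r.factorial : ℝ) * (q.choose r : ℝ) * (p.choose r : ℝ) else 0) := by
  unfold wickB
  rw [← Finset.sum_subset (s₁ := Finset.range (min q p + 1)) (s₂ := Finset.range (p + 1))
    (Finset.range_mono (by omega)), Finset.mul_sum]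
  · refine Finset.sum_le_sum fun r hr => ?_
    have hr' : r ≤ min q p := by simpa [Nat.lt_succ_iff] using hr
    split_ifs with h
    · have hr0 : r ≠ 0 := by
        rintro rfl
        have : (q : ℝ) + p ≤ 2 * i := by push_cast at h; linarith
        have : q + p ≤ 2 * i := by exact_mod_cast this
        omega
      have h2 : ((2 * i).descFactorial (q + p - 2 * r) : ℝ) ≤ (2 * i).factorial := by
        have : q + p - 2 * r ≤ 2 * i := by
          have : (q : ℝ) + p ≤ 2 * r + 2 * i := by linarith
          have : q + p ≤ 2 * r + 2 * i := by exact_mod_cast this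
          omega
        have h3 := Nat.factorial_mul_descFactorial this
        have h4 := Nat.factorial_pos (2 * i - (q + p - 2 * r))
        exact_mod_cast h3 ▸ Nat.le_mul_of_pos_left _ h4
      have h3 : ρ ^ r ≤ ρ := pow_le_of_le_one h0 h1 hr0
      calc _ ≤ (r.factorial : ℝ) * (q.choose r : ℝ) * (p.choose r : ℝ) * ρ * (2 * i).factorial := by
            gcongr
        _ = _ := by ring
    · have : 2 * i < q + p - 2 * r := by
        have : (2 * r : ℝ) + 2 * i < q + p := by rw [not_le] at h; linarith
        have : 2 * r + 2 * i < q + p := by exact_mod_cast this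
        omega
      rw [Nat.descFactorial_eq_zero_iff_lt.2 this]
      simp
  · intro r hr hr'
    have : q < r := by simp at hr hr'; omega
    rw [Nat.choose_eq_zero_of_lt this]
    simp

lemma wickB_eq_zero (ρ : ℝ) (i q p : ℕ) (h : 2 * i < ((q : ℤ) - (p : ℤ)).natAbs) :
    wickB ρ (2 * i) q p = 0 := by
  refine Finset.sum_eq_zero fun r hr => ?_
  have hr' : r ≤ p := by simpa [Nat.lt_succ_iff] using hr
  by_cases hq : r ≤ q
  · rw [Nat.descFactorial_eq_zero_iff_lt.2 (by omega)]
    simp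
  · rw [Nat.choose_eq_zero_of_lt (by omega : q < r)]
    simp

/-! ### Gaussian structure of fractional Brownian motion -/

section
variable {Ω : Type*} [MeasurableSpace Ω] {P : Measure Ω} {ν : ℝ}
  {x : ℝ → Ω → ℝ}

lemma fbm_gauss (hx : IsFBM P ν x) {m : ℕ} (t : Fin m → ℝ) (ht : ∀ j, t j ∈ Set.Icc (0 : ℝ) 1) :
    HasGaussianLaw (fun ω j => x (t j) ω) P where
  isGaussian_map := by
    have hm : Measurable (fun ω j => x (t j) ω) := measurable_pi_lambda _ fun j => hx.1 (t j)
    refine isGaussian_of_map_eq_gaussianReal fun L => ?_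
    · refine ⟨0, (∑ j, ∑ k, L (Pi.single j 1) * L (Pi.single k 1) *
        fbmCov ν (t j) (t k)).toNNReal, ?_⟩
      rw [Measure.map_map (by fun_prop) hm]
      have : L ∘ (fun ω j => x (t j) ω) = fun ω => ∑ j, L (Pi.single j 1) * x (t j) ω := by
        ext ω
        have h := L.toLinearMap.pi_apply_eq_sum_univ (fun j => x (t j) ω)
        simp only [ContinuousLinearMap.coe_coe] at h
        simp only [Function.comp]
        rw [h]
        refine Finset.sum_congr rfl fun j _ => ?_
        rw [smul_eq_mul, mul_comm]
        congr 2
        ext k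
        simp [Pi.single_apply, eq_comm]
      rw [this]
      exact hx.2.2 m t ht _

/-- The maximum with `0` comes from `Real.toNNReal` in the definition of fBm. -/
lemma fbm_lin (hx : IsFBM P ν x) {m : ℕ} (t : Fin m → ℝ) (ht : ∀ j, t j ∈ Set.Icc (0 : ℝ) 1)
    (a : Fin m → ℝ) : (∫ ω, ∑ j, a j * x (t j) ω ∂P = 0) ∧
    ∫ ω, (∑ j, a j * x (t j) ω) ^ 2 ∂P
      = max (∑ j, ∑ k, a j * a k * fbmCov ν (t j) (t k)) 0 := by
  have h := hx.2.2 m t ht a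
  have hm : Measurable (fun ω => ∑ j, a j * x (t j) ω) :=
    Finset.measurable_sum _ fun j _ => (hx.1 (t j)).const_mul _
  constructor
  · have := integral_map (μ := P) hm.aemeasurable (f := fun y : ℝ => y)
      (by fun_prop)
    rw [← this, h, integral_id_gaussianReal]
  · have := integral_map (μ := P) hm.aemeasurable (f := fun y : ℝ => y ^ 2)
      (by fun_prop)
    rw [← this, h, ← Real.coe_toNNReal']
    have hv := variance_of_integral_eq_zero (μ := gaussianReal 0
      (∑ j, ∑ k, a j * a k * fbmCov ν (t j) (t k)).toNNReal) (X := fun y : ℝ => y) (by fun_prop)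
      integral_id_gaussianReal
    rw [← hv, variance_fun_id_gaussianReal]

lemma fbm_mean (hx : IsFBM P ν x) {t : ℝ} (ht : t ∈ Set.Icc (0 : ℝ) 1) : ∫ ω, x t ω ∂P = 0 := by
  simpa using (fbm_lin hx (m := 1) (fun _ => t) (fun _ => ht) (fun _ => 1)).1

lemma fbmCov_self (hν : 0 < ν) (t : ℝ) : fbmCov ν t t = t ^ (2 * ν) := by
  unfold fbmCov
  rw [sub_self, abs_zero, Real.zero_rpow (by positivity)]
  ring

lemma fbm_memLp (hx : IsFBM P ν x) {t : ℝ} (ht : t ∈ Set.Icc (0 : ℝ) 1) : MemLp (x t) 2 P := by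
  have := (fbm_gauss hx (m := 1) (fun _ => t) (fun _ => ht)).memLp_two
  exact (memLp_pi_iff.1 this) 0

/-- By polarization: the quadratic form is visibly nonnegative on `x s`, `x t` and `x s - x t`, so
the truncation at `0` plays no role. -/
lemma fbm_cov (hν : 0 < ν) (hx : IsFBM P ν x) {s t : ℝ} (hs : s ∈ Set.Icc (0 : ℝ) 1)
    (ht : t ∈ Set.Icc (0 : ℝ) 1) : ∫ ω, x s ω * x t ω ∂P = fbmCov ν s t := by
  have hsq : ∀ {r : ℝ}, r ∈ Set.Icc (0 : ℝ) 1 → ∫ ω, x r ω ^ 2 ∂P = r ^ (2 * ν) := by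
    intro r hr
    have := (fbm_lin hx (m := 1) (fun _ => r) (fun _ => hr) (fun _ => 1)).2
    simp only [Finset.univ_unique, Fin.default_eq_zero, Finset.sum_const, Finset.card_singleton,
      one_smul, one_mul, fbmCov_self hν] at this
    rw [this, max_eq_left (Real.rpow_nonneg hr.1 _)]
  have h2 := (fbm_lin hx (m := 2) ![s, t] (by intro j; fin_cases j <;> simpa) ![1, -1]).2
  have he : ∑ j : Fin 2, ∑ k : Fin 2, (![1, -1] : Fin 2 → ℝ) j * (![1, -1] : Fin 2 → ℝ) k *
      fbmCov ν ((![s, t] : Fin 2 → ℝ) j) ((![s, t] : Fin 2 → ℝ) k) = |t - s| ^ (2 * ν) := by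
    simp [Fin.sum_univ_two, fbmCov_self hν]
    unfold fbmCov
    rw [abs_sub_comm s t]
    ring
  rw [he, max_eq_left (by positivity)] at h2
  have is := (fbm_memLp hx hs).integrable_sq
  have it := (fbm_memLp hx ht).integrable_sq
  have ist : Integrable (fun ω => x s ω * x t ω) P :=
    (fbm_memLp hx hs).integrable_mul (fbm_memLp hx ht)
  have is_add : Integrable (fun ω => x s ω ^ 2 + x t ω ^ 2) P := is.add it
  have h3 : ∫ ω, (∑ j : Fin 2, (![1, -1] : Fin 2 → ℝ) j * x ((![s, t] : Fin 2 → ℝ) j) ω) ^ 2 ∂P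
      = ∫ ω, x s ω ^ 2 ∂P + ∫ ω, x t ω ^ 2 ∂P - 2 * ∫ ω, x s ω * x t ω ∂P := by
    rw [← integral_add is it, ← integral_const_mul, ← integral_sub is_add (ist.const_mul 2)]
    refine integral_congr_ae (ae_of_all _ fun ω => ?_)
    simp [Fin.sum_univ_two]
    ring
  rw [h3, hsq hs, hsq ht] at h2
  unfold fbmCov
  linarith

/-- Covariance of the fBm increments over `[b, a]` and `[d, c]`, with exponent `α = 2 ν`. -/
def incCov (α a b c d : ℝ) : ℝ := (|a - d| ^ α + |b - c| ^ α - |a - c| ^ α - |b - d| ^ α) / 2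

lemma fbm_incr_gauss (hx : IsFBM P ν x) (c : ℝ) (u v : Fin 4 → ℝ)
    (hu : ∀ j, u j ∈ Set.Icc (0 : ℝ) 1) (hv : ∀ j, v j ∈ Set.Icc (0 : ℝ) 1) :
    HasGaussianLaw (fun ω j => c * (x (u j) ω - x (v j) ω)) P := by
  have h := fbm_gauss hx (Fin.append u v) (by
    intro j
    refine Fin.addCases (fun i => ?_) (fun i => ?_) j
    · simpa using hu i
    · simpa only [Fin.append_right] using hv i)
  have h' := h.map_fun (ContinuousLinearMap.pi fun i : Fin 4 =>
    c • (ContinuousLinearMap.proj (R := ℝ) (φ := fun _ : Fin (4 + 4) => ℝ) (Fin.castAdd 4 i)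
      - ContinuousLinearMap.proj (R := ℝ) (φ := fun _ : Fin (4 + 4) => ℝ) (Fin.natAdd 4 i)))
  refine h'.congr (ae_of_all _ fun ω => ?_)
  ext i
  simp only [ContinuousLinearMap.coe_pi', FunLike.coe_smul, Pi.smul_apply,
    FunLike.coe_sub, Pi.sub_apply, ContinuousLinearMap.proj_apply, Fin.append_left,
    Fin.append_right, smul_eq_mul]

/-- Self-similarity: rescaled increments on the grid have the covariance of fBm on the integers. -/
lemma fbm_incr_cov (hν : 0 < ν) (hx : IsFBM P ν x) {n : ℕ} (hn : 1 ≤ n) {a b c d : ℕ}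
    (ha : a ≤ n) (hb : b ≤ n) (hc : c ≤ n) (hd : d ≤ n) :
    ∫ ω, ((n : ℝ) ^ ν * (x (a / n) ω - x (b / n) ω)) * ((n : ℝ) ^ ν * (x (c / n) ω - x (d / n) ω)) ∂P
      = incCov (2 * ν) a b c d := by
  have hn0 : (0 : ℝ) < n := by exact_mod_cast hn
  have hm : ∀ {a : ℕ}, a ≤ n → (a / n : ℝ) ∈ Set.Icc (0 : ℝ) 1 := fun h =>
    ⟨by positivity, (div_le_one hn0).2 (by exact_mod_cast h)⟩
  have hi : ∀ {a b : ℕ}, a ≤ n → b ≤ n → Integrable (fun ω => x (a / n) ω * x (b / n) ω) P :=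
    fun h h' => (fbm_memLp hx (hm h)).integrable_mul (fbm_memLp hx (hm h'))
  have hi' : ∀ {a b c : ℕ}, a ≤ n → b ≤ n → c ≤ n →
      Integrable (fun ω => x (a / n) ω * x (b / n) ω - x (a / n) ω * x (c / n) ω) P :=
    fun h h' h'' => (hi h h').sub (hi h h'')
  have key : ∫ ω, ((n : ℝ) ^ ν * (x (a / n) ω - x (b / n) ω)) *
      ((n : ℝ) ^ ν * (x (c / n) ω - x (d / n) ω)) ∂P
      = (n : ℝ) ^ (2 * ν) * ((∫ ω, x (a / n) ω * x (c / n) ω ∂P - ∫ ω, x (a / n) ω * x (d / n) ω ∂P)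
        - (∫ ω, x (b / n) ω * x (c / n) ω ∂P - ∫ ω, x (b / n) ω * x (d / n) ω ∂P)) := by
    rw [← integral_sub (hi ha hc) (hi ha hd), ← integral_sub (hi hb hc) (hi hb hd),
      ← integral_sub (hi' ha hc hd) (hi' hb hc hd),
      ← integral_const_mul]
    refine integral_congr_ae (ae_of_all _ fun ω => ?_)
    simp only
    rw [two_mul, Real.rpow_add hn0]
    ring
  have hs : ∀ a b : ℕ, |(a / n : ℝ) - b / n| ^ (2 * ν)
      = |(a : ℝ) - b| ^ (2 * ν) / (n : ℝ) ^ (2 * ν) := by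
    intro a b
    rw [← sub_div, abs_div, Nat.abs_cast, Real.div_rpow (abs_nonneg _) hn0.le]
  have hnν : (n : ℝ) ^ (2 * ν) ≠ 0 := (Real.rpow_pos_of_pos hn0 _).ne'
  rw [key, fbm_cov hν hx (hm ha) (hm hc), fbm_cov hν hx (hm ha) (hm hd),
    fbm_cov hν hx (hm hb) (hm hc), fbm_cov hν hx (hm hb) (hm hd)]
  unfold fbmCov incCov
  rw [hs, hs, hs, hs, abs_sub_comm (a : ℝ), abs_sub_comm (b : ℝ), abs_sub_comm (a : ℝ) c,
    abs_sub_comm (b : ℝ) d]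
  field_simp
  ring

end

/-! ### Covariance estimates -/

lemma abs_rpow_sub_le {α : ℝ} (h0 : 0 < α) (h1 : α ≤ 1) (u v : ℝ) :
    |(|u| ^ α - |v| ^ α)| ≤ |u - v| ^ α := by
  have key : ∀ u v : ℝ, |u| ^ α - |v| ^ α ≤ |u - v| ^ α := by
    intro u v
    have h2 : |u| ≤ |v| + |u - v| := by
      have := abs_add_le v (u - v)
      simpa using this
    have h3 := Real.rpow_le_rpow (abs_nonneg u) h2 h0.le
    have h4 := Real.rpow_add_le_add_rpow (abs_nonneg v) (abs_nonneg (u - v)) h0.le h1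
    linarith
  rw [abs_le]
  have := key v u
  rw [abs_sub_comm] at this
  exact ⟨by linarith, key u v⟩

/-- For `α ≤ 1` the covariance with any other increment is at most the variance `|a - b| ^ α`. -/
lemma abs_incCov_le {α : ℝ} (h0 : 0 < α) (h1 : α ≤ 1) (a b c d : ℝ) :
    |incCov α a b c d| ≤ |a - b| ^ α := by
  have e1 := abs_le.1 (abs_rpow_sub_le h0 h1 (a - d) (b - d))
  have e2 := abs_le.1 (abs_rpow_sub_le h0 h1 (b - c) (a - c))
  rw [show a - d - (b - d) = a - b by ring] at e1
  rw [show b - c - (a - c) = -(a - b) by ring, abs_neg] at e2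
  unfold incCov
  rw [abs_le]
  constructor <;> linarith [e1.1, e1.2, e2.1, e2.2]

lemma incCov_swap (α a b c d : ℝ) : incCov α a b c d = incCov α c d a b := by
  unfold incCov
  rw [abs_sub_comm a d, abs_sub_comm b c, abs_sub_comm a c, abs_sub_comm b d]
  ring

lemma incCov_self {α : ℝ} (h0 : 0 < α) (a : ℝ) : incCov α (a + 1) a (a + 1) a = 1 := by
  unfold incCov
  simp [Real.zero_rpow h0.ne']

/-- By concavity of `t ↦ t ^ α`, disjoint increments are negatively correlated and the absolute
covariances telescope. -/
lemma sum_incCov_aux {α : ℝ} (h0 : 0 < α) (h1 : α ≤ 1) (M : ℕ) :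
    ∑ m ∈ Finset.range M, |incCov α ((m + 1 : ℕ) + 1) (m + 1 : ℕ) 1 0| ≤ 1 / 2 := by
  have key : ∀ m : ℕ, |incCov α ((m + 1 : ℕ) + 1) (m + 1 : ℕ) 1 0|
      = (((m : ℝ) + 1) ^ α - (m : ℝ) ^ α) / 2
        - (((m + 1 : ℕ) + 1 : ℝ) ^ α - ((m + 1 : ℕ) : ℝ) ^ α) / 2 := by
    intro m
    have hc := (Real.concaveOn_rpow h0.le h1).2 (show (m : ℝ) ∈ Set.Ici 0 from Set.mem_Ici.2 m.cast_nonneg)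
      (show (m : ℝ) + 1 + 1 ∈ Set.Ici 0 from Set.mem_Ici.2 (by positivity))
      (show (0 : ℝ) ≤ 1 / 2 by norm_num) (show (0 : ℝ) ≤ 1 / 2 by norm_num) (by norm_num)
    simp only [smul_eq_mul] at hc
    rw [show 1 / 2 * (m : ℝ) + 1 / 2 * ((m : ℝ) + 1 + 1) = m + 1 by ring] at hc
    have e : incCov α ((m + 1 : ℕ) + 1) (m + 1 : ℕ) 1 0
        = ((m : ℝ) + 1 + 1) ^ α / 2 + (m : ℝ) ^ α / 2 - ((m : ℝ) + 1) ^ α := by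
      unfold incCov
      push_cast
      rw [sub_zero, sub_zero, add_sub_cancel_right, add_sub_cancel_right,
        abs_of_nonneg (by positivity : (0 : ℝ) ≤ (m : ℝ) + 1 + 1),
        abs_of_nonneg (by positivity : (0 : ℝ) ≤ (m : ℝ) + 1),
        abs_of_nonneg (by positivity : (0 : ℝ) ≤ (m : ℝ))]
      ring
    rw [e, abs_of_nonpos (by linarith)]
    push_cast
    ring
  rw [Finset.sum_congr rfl fun m _ => key m,
    Finset.sum_range_sub' (fun m : ℕ => (((m : ℝ) + 1) ^ α - (m : ℝ) ^ α) / 2)]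
  have : (M : ℝ) ^ α ≤ ((M : ℝ) + 1) ^ α :=
    Real.rpow_le_rpow (by positivity) (by linarith) h0.le
  simp only [Nat.cast_zero, zero_add, Real.one_rpow, Real.zero_rpow h0.ne']
  linarith

/-- The diagonal term contributes `1` and each side of it at most `1 / 2`. -/
lemma sum_incCov_le {α : ℝ} (h0 : 0 < α) (h1 : α ≤ 1) (j : ℕ) (s : Finset ℕ) :
    ∑ k ∈ s, |incCov α (j + 1) j (k + 1) k| ≤ 2 := by
  obtain ⟨N, hN⟩ := s.exists_nat_subset_range
  have hsub : s ⊆ Finset.range (j + (N + 1)) :=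
    hN.trans (Finset.range_mono (by omega))
  refine (Finset.sum_le_sum_of_subset_of_nonneg hsub fun _ _ _ => abs_nonneg _).trans ?_
  rw [Finset.sum_range_add, Finset.sum_range_succ', ← Finset.sum_range_reflect]
  have tr : ∀ a b c d e : ℝ, incCov α (a + e) (b + e) (c + e) (d + e) = incCov α a b c d := by
    intro a b c d e
    simp [incCov]
  have e1 : ∀ k ∈ Finset.range j, |incCov α (j + 1) j ((j - 1 - k : ℕ) + 1) (j - 1 - k : ℕ)|
      = |incCov α ((k + 1 : ℕ) + 1) (k + 1 : ℕ) 1 0| := by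
    intro k hk
    have hk : k < j := by simpa using hk
    have hc : (j : ℝ) = (k + 1 : ℕ) + (j - 1 - k : ℕ) := by
      rw [← Nat.cast_add]; congr 1; omega
    rw [hc, ← tr ((k + 1 : ℕ) + 1) (k + 1 : ℕ) 1 0 (j - 1 - k : ℕ)]
    congr 2 <;> ring
  have e2 : ∀ k ∈ Finset.range N, |incCov α (j + 1) j ((j + (k + 1) : ℕ) + 1) (j + (k + 1) : ℕ)|
      = |incCov α ((k + 1 : ℕ) + 1) (k + 1 : ℕ) 1 0| := by
    intro k _
    rw [incCov_swap, ← tr ((k + 1 : ℕ) + 1) (k + 1 : ℕ) 1 0 j]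
    congr 2 <;> push_cast <;> ring
  rw [Finset.sum_congr rfl e1, Finset.sum_congr rfl e2]
  have h2 := sum_incCov_aux h0 h1 j
  have h3 := sum_incCov_aux h0 h1 N
  have h4 := incCov_self h0 (j : ℝ)
  rw [add_zero, h4, abs_one]
  linarith

/-! ### Discrete integrals -/

section
variable {Ω : Type*} [MeasurableSpace Ω] {P : Measure Ω} [IsProbabilityMeasure P] {ν : ℝ}
  {x : ℝ → Ω → ℝ}

/-- The vector `(X, Y, ξ, η)` attached to the starting grid point `m` and to the grid points `j`, `k`:
the increments of `n ^ ν * x` over `[m, j]`, `[m, k]`, `[j, j + 1]`, `[k, k + 1]` in units of `1 / n`. -/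
def quad (x : ℝ → Ω → ℝ) (ν : ℝ) (n m j k : ℕ) (i : Fin 4) (ω : Ω) : ℝ :=
  (n : ℝ) ^ ν * (x ((![j, k, j + 1, k + 1] i : ℕ) / n) ω - x ((![m, m, j, k] i : ℕ) / n) ω)

/-- Here `R` is any bound at least `1` for the distances of `j` and `k` to `m`. -/
lemma wickM_quad_le (hν : 0 < ν) (hν2 : ν ≤ 1 / 2) (hx : IsFBM P ν x) {n m j k : ℕ} (hn : 1 ≤ n)
    (hj : j < n) (hk : k < n) (hm : m ≤ n) {R : ℝ} (hR : 1 ≤ R)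
    (hjR : |(j : ℝ) - m| ≤ R) (hkR : |(k : ℝ) - m| ≤ R) (i q p : ℕ) :
    |wickM P (quad x ν n m j k) i i q p| ≤ ((2 * i).factorial * (R ^ ν) ^ (2 * i)) *
      wickB |incCov (2 * ν) (j + 1) j (k + 1) k| (2 * i) q p := by
  have hα0 : 0 < 2 * ν := by linarith
  have hα1 : 2 * ν ≤ 1 := by linarith
  have hn0 : (0 : ℝ) < n := by exact_mod_cast hn
  have hI : ∀ {a : ℕ}, a ≤ n → ((a : ℝ) / n) ∈ Set.Icc (0 : ℝ) 1 := fun h =>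
    ⟨by positivity, (div_le_one hn0).2 (by exact_mod_cast h)⟩
  have hu : ∀ l : Fin 4, (![j, k, j + 1, k + 1] l : ℕ) ≤ n := by
    intro l; fin_cases l <;> simp <;> omega
  have hv : ∀ l : Fin 4, (![m, m, j, k] l : ℕ) ≤ n := by
    intro l; fin_cases l <;> simp <;> omega
  have hG : HasGaussianLaw (fun ω l => quad x ν n m j k l ω) P :=
    fbm_incr_gauss hx ((n : ℝ) ^ ν) (fun l => (![j, k, j + 1, k + 1] l : ℕ) / n)
      (fun l => (![m, m, j, k] l : ℕ) / n) (fun l => hI (hu l)) (fun l => hI (hv l))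
  have h0 : ∀ l, ∫ ω, quad x ν n m j k l ω ∂P = 0 := by
    intro l
    unfold quad
    rw [integral_const_mul, integral_sub ((fbm_memLp hx (hI (hu l))).integrable one_le_two)
      ((fbm_memLp hx (hI (hv l))).integrable one_le_two), fbm_mean hx (hI (hu l)),
      fbm_mean hx (hI (hv l))]
    simp
  have hc : ∀ l l', ∫ ω, quad x ν n m j k l ω * quad x ν n m j k l' ω ∂P
      = incCov (2 * ν) (![j, k, j + 1, k + 1] l : ℕ) (![m, m, j, k] l : ℕ)
        (![j, k, j + 1, k + 1] l' : ℕ) (![m, m, j, k] l' : ℕ) := fun l l' =>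
    fbm_incr_cov hν hx hn (hu l) (hv l) (hu l') (hv l')
  have h22 : ∫ ω, quad x ν n m j k 2 ω * quad x ν n m j k 2 ω ∂P = 1 := by
    rw [hc]; simpa using incCov_self hα0 (j : ℝ)
  have h33 : ∫ ω, quad x ν n m j k 3 ω * quad x ν n m j k 3 ω ∂P = 1 := by
    rw [hc]; simpa using incCov_self hα0 (k : ℝ)
  have hb2 : ∀ l, |∫ ω, quad x ν n m j k 2 ω * quad x ν n m j k l ω ∂P| ≤ 1 := by
    intro l
    rw [hc]
    refine (abs_incCov_le hα0 hα1 _ _ _ _).trans (le_of_eq ?_)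
    simp
  have hb3 : ∀ l, |∫ ω, quad x ν n m j k 3 ω * quad x ν n m j k l ω ∂P| ≤ 1 := by
    intro l
    rw [hc]
    refine (abs_incCov_le hα0 hα1 _ _ _ _).trans (le_of_eq ?_)
    simp
  have hRS : R ^ (2 * ν) = (R ^ ν) ^ 2 := by
    rw [mul_comm, Real.rpow_mul (by linarith), Real.rpow_two]
  have hb0 : ∀ l, |∫ ω, quad x ν n m j k 0 ω * quad x ν n m j k l ω ∂P| ≤ (R ^ ν) ^ 2 := by
    intro l
    rw [hc, ← hRS]
    exact (abs_incCov_le hα0 hα1 _ _ _ _).trans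
      (Real.rpow_le_rpow (abs_nonneg _) hjR hα0.le)
  have hb1 : ∀ l, |∫ ω, quad x ν n m j k 1 ω * quad x ν n m j k l ω ∂P| ≤ (R ^ ν) ^ 2 := by
    intro l
    rw [hc, ← hRS]
    exact (abs_incCov_le hα0 hα1 _ _ _ _).trans
      (Real.rpow_le_rpow (abs_nonneg _) hkR hα0.le)
  have hS : 1 ≤ R ^ ν := Real.one_le_rpow hR hν.le
  have h23 : ∫ ω, quad x ν n m j k 2 ω * quad x ν n m j k 3 ω ∂P
      = incCov (2 * ν) (j + 1) j (k + 1) k := by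
    rw [hc]; simp
  have hmom := moment_bound_abs (fun a b => wickM P (quad x ν n m j k) a b 0 0) (R ^ ν) _ _ _ hS
    (hb0 0) (hb0 1) (hb1 1) wick_zero (fun a b => wick_rec0 hG h0 a b) (fun b => wick_rec1 hG h0 b)
  have := wick_bound_abs (wickM P (quad x ν n m j k)) (2 * i)
    ((2 * i).factorial * (R ^ ν) ^ (2 * i)) |incCov (2 * ν) (j + 1) j (k + 1) k| _ _ _ _ _
    (hb2 0) (hb2 1) (hb3 0) (hb3 1) (by rw [h23]) (fun a b q p => wick_rec hG h0 h22 a b q p)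
    (fun a b p => wick_rec' hG h0 h33 a b p) (fun a b hab => by
      refine (hmom a b).trans ?_
      have : ((a + b).factorial : ℝ) ≤ (2 * i).factorial := by
        exact_mod_cast Nat.factorial_le hab
      gcongr) i i q p (by omega)
  rwa [← two_mul] at this

lemma quad_integrable (hx : IsFBM P ν x) {n m j k : ℕ} (hn : 1 ≤ n)
    (hj : j < n) (hk : k < n) (hm : m ≤ n) (F : MvPolynomial (Fin 4) ℝ) :
    Integrable (fun ω => MvPolynomial.eval (fun l => quad x ν n m j k l ω) F) P := by
  have hn0 : (0 : ℝ) < n := by exact_mod_cast hn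
  have hI : ∀ {a : ℕ}, a ≤ n → ((a : ℝ) / n) ∈ Set.Icc (0 : ℝ) 1 := fun h =>
    ⟨by positivity, (div_le_one hn0).2 (by exact_mod_cast h)⟩
  have hu : ∀ l : Fin 4, (![j, k, j + 1, k + 1] l : ℕ) ≤ n := by
    intro l; fin_cases l <;> simp <;> omega
  have hv : ∀ l : Fin 4, (![m, m, j, k] l : ℕ) ≤ n := by
    intro l; fin_cases l <;> simp <;> omega
  have hG : HasGaussianLaw (fun ω l => quad x ν n m j k l ω) P :=
    fbm_incr_gauss hx ((n : ℝ) ^ ν) (fun l => (![j, k, j + 1, k + 1] l : ℕ) / n)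
      (fun l => (![m, m, j, k] l : ℕ) / n) (fun l => hI (hu l)) (fun l => hI (hv l))
  exact gauss_integrable hG F

/-- The grid indices contributing to the discrete integral over `[s, t)`. The first one, `⌈n s⌉`, is
left out since the integrand `(x - x_{ε(s)}) ^ i` vanishes there. -/
def idx (n : ℕ) (s t : ℝ) : Finset ℕ :=
  (Finset.range n).filter fun k => ⌈(n : ℝ) * s⌉₊ < k ∧ (k : ℝ) < n * t

lemma Jtwo_eq {Ω : Type*} {ν : ℝ} {x : ℝ → Ω → ℝ} (n : ℕ) (hn : 1 ≤ n) (s t : ℝ) (hs : 0 ≤ s) (i : ℕ) (hi : 1 ≤ i) (q : ℕ) (ω : Ω) :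
    Jtwo n (xlift x i) (hermIncr x ν n q) s t ω
      = (((n : ℝ) ^ ν) ^ i * i.factorial)⁻¹ * ∑ k ∈ idx n s t,
        ((n : ℝ) ^ ν * (x (k / n) ω - x (⌈(n : ℝ) * s⌉₊ / n) ω)) ^ i *
          Hq q ((n : ℝ) ^ ν * (x ((k + 1 : ℕ) / n) ω - x (k / n) ω)) := by
  have hn0 : (0 : ℝ) < n := by exact_mod_cast hn
  have heps : eps n s = (⌈(n : ℝ) * s⌉₊ : ℝ) / n := by
    unfold eps
    rw [natCast_ceil_eq_intCast_ceil (by positivity)]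
  unfold Jtwo idx
  rw [Finset.sum_filter, Finset.mul_sum]
  refine Finset.sum_congr rfl fun k _ => ?_
  have h1 : s ≤ (k : ℝ) / n ↔ ⌈(n : ℝ) * s⌉₊ ≤ k := by
    rw [Nat.ceil_le, le_div_iff₀ hn0, mul_comm]
  have h2 : (k : ℝ) / n < t ↔ (k : ℝ) < n * t := by
    rw [div_lt_iff₀ hn0, mul_comm]
  simp only [h1, h2, heps]
  have hnν : (n : ℝ) ^ ν ≠ 0 := (Real.rpow_pos_of_pos hn0 _).ne'
  have hf : (i.factorial : ℝ) ≠ 0 := by positivity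
  by_cases hkt : (k : ℝ) < n * t
  · rcases lt_trichotomy ⌈(n : ℝ) * s⌉₊ k with h | h | h
    · rw [if_pos ⟨h.le, hkt⟩, if_pos ⟨h, hkt⟩]
      unfold xlift hermIncr
      rw [mul_pow]
      push_cast
      field_simp
    -- the term at the starting point vanishes because `i ≥ 1`
    · rw [if_pos ⟨h.le, hkt⟩, if_neg (by omega), h]
      unfold xlift
      rw [sub_self, zero_pow (by omega)]
      simp
    · rw [if_neg (by omega), if_neg (by omega)]
      simp
  · rw [if_neg (by tauto), if_neg (by tauto)]
    simp

lemma integral_Jtwo_mul (hx : IsFBM P ν x) (n : ℕ) (hn : 1 ≤ n) (s t : ℝ) (hs : 0 ≤ s)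
    (hs1 : s ≤ 1) (i : ℕ) (hi : 1 ≤ i) (q p : ℕ) :
    ∫ ω, Jtwo n (xlift x i) (hermIncr x ν n q) s t ω *
        Jtwo n (xlift x i) (hermIncr x ν n p) s t ω ∂P
      = ((((n : ℝ) ^ ν) ^ i * i.factorial)⁻¹) ^ 2 * ∑ j ∈ idx n s t, ∑ k ∈ idx n s t,
        wickM P (quad x ν n ⌈(n : ℝ) * s⌉₊ j k) i i q p := by
  have hm : ⌈(n : ℝ) * s⌉₊ ≤ n := by
    rw [Nat.ceil_le]
    exact mul_le_of_le_one_right (by positivity) hs1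
  have hlt : ∀ k ∈ idx n s t, k < n := fun k hk => by simpa using (Finset.mem_filter.1 hk).1
  unfold wickM
  have h1 : ∀ j ∈ idx n s t, ∀ k ∈ idx n s t, Integrable (fun ω => MvPolynomial.eval
      (fun l => quad x ν n ⌈(n : ℝ) * s⌉₊ j k l ω) (wickF i i q p)) P := fun j hj k hk =>
    quad_integrable hx hn (hlt j hj) (hlt k hk) hm _
  have h2 : ∑ j ∈ idx n s t, ∑ k ∈ idx n s t, ∫ ω, MvPolynomial.eval
      (fun l => quad x ν n ⌈(n : ℝ) * s⌉₊ j k l ω) (wickF i i q p) ∂P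
      = ∫ ω, ∑ j ∈ idx n s t, ∑ k ∈ idx n s t, MvPolynomial.eval
      (fun l => quad x ν n ⌈(n : ℝ) * s⌉₊ j k l ω) (wickF i i q p) ∂P := by
    rw [integral_finsetSum _ fun j hj => integrable_finsetSum _ fun k hk => h1 j hj k hk]
    exact Finset.sum_congr rfl fun j hj => (integral_finsetSum _ fun k hk => h1 j hj k hk).symm
  rw [h2, ← integral_const_mul]
  refine integral_congr_ae (ae_of_all _ fun ω => ?_)
  simp only
  rw [Jtwo_eq n hn s t hs i hi, Jtwo_eq n hn s t hs i hi, mul_mul_mul_comm, ← sq,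
    Finset.sum_mul_sum]
  congr 1
  refine Finset.sum_congr rfl fun j _ => Finset.sum_congr rfl fun k _ => ?_
  rw [wickF_eval]
  simp [quad]
  ring

/-- Both the number of indices and their distance to `⌈n s⌉` are at most `n (t - s)`, and if there
is an index at all, then `n (t - s) ≥ 1`. -/
lemma idx_bounds {n : ℕ} (hn : 1 ≤ n) {s t : ℝ} (hs : 0 ≤ s) (hst : s ≤ t) :
    ((idx n s t).card : ℝ) ≤ n * (t - s) ∧ ∀ k ∈ idx n s t, k < n ∧ 1 ≤ n * (t - s) ∧
      |(k : ℝ) - ⌈(n : ℝ) * s⌉₊| ≤ n * (t - s) := by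
  have hc := Nat.le_ceil ((n : ℝ) * s)
  have ht : 0 ≤ (n : ℝ) * t := mul_nonneg (by positivity) (hs.trans hst)
  constructor
  · have hsub : idx n s t ⊆ Finset.Ioc ⌈(n : ℝ) * s⌉₊ ⌊(n : ℝ) * t⌋₊ := by
      intro k hk
      have := (Finset.mem_filter.1 hk).2
      exact Finset.mem_Ioc.2 ⟨this.1, Nat.le_floor this.2.le⟩
    have h := Finset.card_le_card hsub
    rw [Nat.card_Ioc] at h
    have h' : ((idx n s t).card : ℝ) ≤ (⌊(n : ℝ) * t⌋₊ - ⌈(n : ℝ) * s⌉₊ : ℕ) := by exact_mod_cast h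
    refine h'.trans ?_
    rcases le_total ⌈(n : ℝ) * s⌉₊ ⌊(n : ℝ) * t⌋₊ with h2 | h2
    · rw [Nat.cast_sub h2]
      have := Nat.floor_le ht
      linarith
    · rw [Nat.sub_eq_zero_of_le h2, Nat.cast_zero]
      exact mul_nonneg (by positivity) (by linarith)
  · intro k hk
    obtain ⟨h1, h2, h3⟩ := Finset.mem_filter.1 hk
    have h4 : (⌈(n : ℝ) * s⌉₊ : ℝ) + 1 ≤ k := by exact_mod_cast h2
    refine ⟨by simpa using h1, by linarith, ?_⟩
    rw [abs_of_nonneg (by linarith)]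
    linarith

/-- Covariance estimate with the explicit constant `2 (2i)! ^ 2`, valid as soon as `q + p > 2 i`. -/
lemma Jtwo_bound (hν : 0 < ν) (hν2 : ν ≤ 1 / 2) (hx : IsFBM P ν x) (n : ℕ) (hn : 1 ≤ n) (s t : ℝ)
    (hs : 0 ≤ s) (hst : s ≤ t) (ht1 : t ≤ 1) (i : ℕ) (hi : 1 ≤ i) (q p : ℕ)
    (hqp : 2 * i < q + p) :
    ∫ ω, Jtwo n (xlift x i) (hermIncr x ν n q) s t ω *
        Jtwo n (xlift x i) (hermIncr x ν n p) s t ω ∂P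
      ≤ 2 * ((2 * i).factorial : ℝ) ^ 2 * n * (t - s) ^ (2 * (i : ℝ) * ν + 1) *
        ∑ r ∈ Finset.range (min q p + 1),
          (if ((q : ℝ) + (p : ℝ)) / 2 - (i : ℝ) ≤ (r : ℝ) then
            (r.factorial : ℝ) * (q.choose r : ℝ) * (p.choose r : ℝ) else 0) := by
  have hα0 : 0 < 2 * ν := by linarith
  have hα1 : 2 * ν ≤ 1 := by linarith
  have hn0 : (0 : ℝ) < n := by exact_mod_cast hn
  have hts : 0 ≤ t - s := by linarith
  set W := ∑ r ∈ Finset.range (min q p + 1),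
          (if ((q : ℝ) + (p : ℝ)) / 2 - (i : ℝ) ≤ (r : ℝ) then
            (r.factorial : ℝ) * (q.choose r : ℝ) * (p.choose r : ℝ) else 0)
  have hW0 : 0 ≤ W := Finset.sum_nonneg fun r _ => by split_ifs <;> positivity
  set R := (n : ℝ) * (t - s) with hR
  have hR0 : 0 ≤ R := by positivity
  set m := ⌈(n : ℝ) * s⌉₊
  have hm : m ≤ n := by
    rw [Nat.ceil_le]
    exact mul_le_of_le_one_right (by positivity) (hst.trans ht1)
  obtain ⟨hcard, hidx⟩ := idx_bounds hn hs hst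
  set D : ℝ := (2 * i).factorial * (R ^ ν) ^ (2 * i) with hD
  have hD0 : 0 ≤ D := by positivity
  have hterm : ∀ j ∈ idx n s t, ∀ k ∈ idx n s t, wickM P (quad x ν n m j k) i i q p
      ≤ D * (2 * i).factorial * W * |incCov (2 * ν) (j + 1) j (k + 1) k| := by
    intro j hj k hk
    obtain ⟨hj1, hj2, hj3⟩ := hidx j hj
    obtain ⟨hk1, -, hk3⟩ := hidx k hk
    refine (le_abs_self _).trans ((wickM_quad_le hν hν2 hx hn hj1 hk1 hm hj2 hj3 hk3 i q p).trans ?_)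
    have hρ : |incCov (2 * ν) (j + 1) j (k + 1) k| ≤ 1 := by
      refine (abs_incCov_le hα0 hα1 _ _ _ _).trans (le_of_eq ?_)
      simp
    calc _ ≤ D * (((2 * i).factorial * |incCov (2 * ν) (j + 1) j (k + 1) k|) * W) :=
          mul_le_mul_of_nonneg_left (wickB_le (abs_nonneg _) hρ i q p hqp) hD0
      _ = _ := by ring
  have hsum : ∑ j ∈ idx n s t, ∑ k ∈ idx n s t, wickM P (quad x ν n m j k) i i q p
      ≤ R * (D * (2 * i).factorial * W * 2) := by
    calc _ ≤ ∑ j ∈ idx n s t, D * (2 * i).factorial * W * 2 := by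
          refine Finset.sum_le_sum fun j hj => ?_
          refine (Finset.sum_le_sum fun k hk => hterm j hj k hk).trans ?_
          rw [← Finset.mul_sum]
          exact mul_le_mul_of_nonneg_left (sum_incCov_le hα0 hα1 j _) (by positivity)
      _ = (idx n s t).card * (D * (2 * i).factorial * W * 2) := by
          rw [Finset.sum_const, nsmul_eq_mul]
      _ ≤ _ := mul_le_mul_of_nonneg_right hcard (by positivity)
  rw [integral_Jtwo_mul hx n hn s t hs (hst.trans ht1) i hi]
  set c := (((n : ℝ) ^ ν) ^ i * (i.factorial : ℝ))⁻¹ with hc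
  have hnν : 0 < (n : ℝ) ^ ν := Real.rpow_pos_of_pos hn0 _
  -- the powers of `n` cancel by self-similarity
  have hscale : c ^ 2 * (R ^ ν) ^ (2 * i) ≤ (t - s) ^ (2 * (i : ℝ) * ν) := by
    have h1 : R ^ ν = (n : ℝ) ^ ν * (t - s) ^ ν := Real.mul_rpow hn0.le hts
    have h2 : (t - s) ^ (2 * (i : ℝ) * ν) = ((t - s) ^ ν) ^ (2 * i) := by
      rw [← Real.rpow_natCast, ← Real.rpow_mul hts]
      congr 1
      push_cast
      ring
    have h3 : c ^ 2 * (R ^ ν) ^ (2 * i) = ((t - s) ^ ν) ^ (2 * i) / (i.factorial : ℝ) ^ 2 := by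
      rw [hc, h1, mul_pow]
      field_simp
      ring
    rw [h2, h3]
    exact div_le_self (by positivity)
      (one_le_pow₀ (by exact_mod_cast Nat.one_le_iff_ne_zero.2 i.factorial_ne_zero))
  have hpow : (t - s) ^ (2 * (i : ℝ) * ν + 1) = (t - s) ^ (2 * (i : ℝ) * ν) * (t - s) :=
    Real.rpow_add_one' hts (by positivity)
  calc _ ≤ c ^ 2 * (R * (D * (2 * i).factorial * W * 2)) :=
        mul_le_mul_of_nonneg_left hsum (by positivity)
    _ = (c ^ 2 * (R ^ ν) ^ (2 * i)) * (R * ((2 * i).factorial ^ 2 * W * 2)) := by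
        rw [hD]; ring
    _ ≤ (t - s) ^ (2 * (i : ℝ) * ν) * (R * ((2 * i).factorial ^ 2 * W * 2)) :=
        mul_le_mul_of_nonneg_right hscale (by positivity)
    _ = _ := by rw [hpow, hR]; ring

lemma Jtwo_orth (hν : 0 < ν) (hν2 : ν ≤ 1 / 2) (hx : IsFBM P ν x) (n : ℕ) (hn : 1 ≤ n) (s t : ℝ)
    (hs : 0 ≤ s) (hst : s ≤ t) (ht1 : t ≤ 1) (i : ℕ) (hi : 1 ≤ i) (q p : ℕ)
    (hqp : 2 * i < ((q : ℤ) - (p : ℤ)).natAbs) :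
    ∫ ω, Jtwo n (xlift x i) (hermIncr x ν n q) s t ω *
        Jtwo n (xlift x i) (hermIncr x ν n p) s t ω ∂P = 0 := by
  have hm : ⌈(n : ℝ) * s⌉₊ ≤ n := by
    rw [Nat.ceil_le]
    exact mul_le_of_le_one_right (by positivity) (hst.trans ht1)
  obtain ⟨-, hidx⟩ := idx_bounds hn hs hst
  rw [integral_Jtwo_mul hx n hn s t hs (hst.trans ht1) i hi]
  refine mul_eq_zero_of_right _ (Finset.sum_eq_zero fun j hj => Finset.sum_eq_zero fun k hk => ?_)
  obtain ⟨hj1, hj2, hj3⟩ := hidx j hj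
  obtain ⟨hk1, -, hk3⟩ := hidx k hk
  have := wickM_quad_le hν hν2 hx hn hj1 hk1 hm hj2 hj3 hk3 i q p
  rw [wickB_eq_zero _ i q p hqp, mul_zero] at this
  exact abs_nonpos_iff.1 this

end

/-- **Second-moment estimates for discrete integrals of Hermite variations**
(Lemma 5.3 (iii)-(iv)): `E[J_s^t(x^i;h^{n,q}) J_s^t(x^i;h^{n,q'})]` is bounded by
`K n (t-s)^{2iν+1} ∑_r r! C(q,r) C(q',r)` when `|q-q'| ≤ 2i`, the constant depending
only on `ν` and `ℓ`, and vanishes when `|q-q'| > 2i`. -/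
theorem hermite_discrete_integral_covariance
    (ν : ℝ) (hν : 0 < ν) (hν2 : ν ≤ 1 / 2)
    (ℓ : ℕ) (hℓ1 : (ℓ : ℝ) - 1 ≤ 1 / (2 * ν)) (hℓ2 : 1 / (2 * ν) < ℓ) :
    ∃ K : ℝ,
      ∀ (Ω : Type) (_ : MeasurableSpace Ω) (P : Measure Ω), IsProbabilityMeasure P →
      ∀ x : ℝ → Ω → ℝ, IsFBM P ν x →
      ∀ i : ℕ, 1 ≤ i → i ≤ ℓ - 1 →
      ∀ q q' : ℕ, ℓ ≤ q → ℓ ≤ q' →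
      ∀ n : ℕ, 1 ≤ n →
      ∀ s t : ℝ, 0 ≤ s → s ≤ t → t ≤ 1 →
        ((((q : ℤ) - (q' : ℤ)).natAbs ≤ 2 * i →
          (∫ ω, Jtwo n (xlift x i) (hermIncr x ν n q) s t ω *
              Jtwo n (xlift x i) (hermIncr x ν n q') s t ω ∂P)
            ≤ K * (n : ℝ) * (t - s) ^ (2 * (i : ℝ) * ν + 1) *
              ∑ r ∈ Finset.range (min q q' + 1),
                (if ((q : ℝ) + (q' : ℝ)) / 2 - (i : ℝ) ≤ (r : ℝ) then
                  (Nat.factorial r : ℝ) * (Nat.choose q r : ℝ) * (Nat.choose q' r : ℝ)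
                else 0)) ∧
        (2 * i < (((q : ℤ) - (q' : ℤ)).natAbs) →
          (∫ ω, Jtwo n (xlift x i) (hermIncr x ν n q) s t ω *
              Jtwo n (xlift x i) (hermIncr x ν n q') s t ω ∂P) = 0)) := by
  refine ⟨2 * ((2 * ℓ).factorial : ℝ) ^ 2, ?_⟩
  intro Ω _ P hP x hx i hi hiℓ q q' hq hq' n hn s t hs hst ht
  refine ⟨fun _ => ?_, fun h => Jtwo_orth hν hν2 hx n hn s t hs hst ht i hi q q' h⟩
  refine (Jtwo_bound hν hν2 hx n hn s t hs hst ht i hi q q' (by omega)).trans ?_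
  have h1 : ((2 * i).factorial : ℝ) ≤ ((2 * ℓ).factorial : ℝ) := by
    exact_mod_cast Nat.factorial_le (by omega)
  have h2 : 0 ≤ (t - s) ^ (2 * (i : ℝ) * ν + 1) := Real.rpow_nonneg (by linarith) _
  refine mul_le_mul_of_nonneg_right ?_
    (Finset.sum_nonneg fun r _ => by split_ifs <;> positivity)
  gcongr

end
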